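/- Assume in addition that M(β*) ≤ s and that Assumption RE(s) holds with constant κ = κ(s). Then with probability at least 1 − 2M^{1−q}, every Group Lasso solution β̂ satisfies simultaneously: (i) (1/N)‖X(β̂ − β*)‖² ≤ (16/κ²)·Σ_{j∈J(β*)} λ_j²; (ii) ‖β̂ − β*‖_{2,1} ≤ (16/κ²)·Σ_{j∈J(β*)} λ_j²/λ_min; (iii) M(β̂) ≤ (64 φ_max/κ²)·Σ_{j∈J(β*)} λ_j²/λ_min², where λ_min = min_j λ_j and φ_max is the maximal eigenvalue of XᵀX/N. -/

import Mathlib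

/-!
The estimates hold on the event that every group satisfies `‖(Xᵀ W)^j‖ ≤ N λ_j / 2`.

*Probability of the event.* For a single group with columns `B`, rotating the Gaussian vector into
the eigenbasis of `B Bᵀ` turns `‖Bᵀ W‖²` into `σ² ∑ v_i ξ_i²` with `ξ_i` independent standard
Gaussian, `∑ v_i = N tr Ψ_j` and `0 ≤ v_i ≤ N ⦀Ψ_j⦀` (`gaussian_quadForm_tail`). Chernoff's bound
and `(1 - 2t)^(-1/2) ≤ exp (t + t² / (1 - 2t))` give the Laurent–Massart tail
`weighted_chiSq_tail`; the sum of squares of the weights is at most `K_j (N ⦀Ψ_j⦀)²` because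
`tr Ψ_j ≤ K_j ⦀Ψ_j⦀`. With deviation parameter `q log M` each group fails with probability at most
`M ^ (-q)`, and a union bound finishes (`noise_event`).

*Deterministic part.* Put `Δ = b - βstar`. Comparing the objective at `b` and `βstar` gives
`‖XΔ‖² / N + ∑ λ_j ‖Δ^j‖ ≤ 4 ∑_{j ∈ J} λ_j ‖Δ^j‖`, where `J` is the support of `βstar`
(`basic_inequality`). Hence `Δ` lies in the cone of the restricted eigenvalue condition, and
Cauchy–Schwarz closes the loop for the prediction and group-norm bounds
(`prediction_and_group_bound`). For sparsity, stationarity of `b` along each of its active groups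
forces `‖(Xᵀ X Δ)^j‖ ≥ N λ_j / 2`, while the total `‖Xᵀ X Δ‖²` is at most `N φ_max ‖X Δ‖²`
(`card_active_le`).
-/

open MeasureTheory ProbabilityTheory Finset

noncomputable section

namespace GroupLasso

/-- The index set `{1,…,K}` partitioned into `M` groups, the `j`-th of size `Kj j`. -/
abbrev GIdx {M : ℕ} (Kj : Fin M → ℕ) : Type := (j : Fin M) × Fin (Kj j)

/-- Euclidean norm `‖β^j‖` of the `j`-th group of coefficients. -/
def gnorm {M : ℕ} {Kj : Fin M → ℕ} (β : GIdx Kj → ℝ) (j : Fin M) : ℝ :=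
  Real.sqrt (∑ t, (β ⟨j, t⟩) ^ 2)

/-- Trace of `Ψ_j = X_{G_j}ᵀ X_{G_j} / N`. -/
def trPsi {N M : ℕ} {Kj : Fin M → ℕ} (X : Matrix (Fin N) (GIdx Kj) ℝ) (j : Fin M) : ℝ :=
  (∑ t, ∑ i, (X i ⟨j, t⟩) ^ 2) / N

/-- Spectral norm of the positive semidefinite matrix `Ψ_j = X_{G_j}ᵀ X_{G_j} / N`,
expressed as the supremum of its quadratic form over unit vectors supported on group `j`. -/
def specPsi {N M : ℕ} {Kj : Fin M → ℕ} (X : Matrix (Fin N) (GIdx Kj) ℝ) (j : Fin M) : ℝ :=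
  sSup {x | ∃ v : GIdx Kj → ℝ, (∀ k : GIdx Kj, k.1 ≠ j → v k = 0) ∧ (∑ k, (v k) ^ 2 = 1) ∧
    x = (∑ i, (∑ k, X i k * v k) ^ 2) / N}

/-- The Group Lasso objective `(1/N)‖Xβ − y‖² + 2 Σ_j λ_j ‖β^j‖`. -/
def glObj {N M : ℕ} {Kj : Fin M → ℕ} (X : Matrix (Fin N) (GIdx Kj) ℝ) (y : Fin N → ℝ)
    (lam : Fin M → ℝ) (β : GIdx Kj → ℝ) : ℝ :=
  (∑ i, (X.mulVec β i - y i) ^ 2) / N + 2 * ∑ j, lam j * gnorm β j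

/-- `b` is a Group Lasso solution. -/
def IsGLSol {N M : ℕ} {Kj : Fin M → ℕ} (X : Matrix (Fin N) (GIdx Kj) ℝ) (y : Fin N → ℝ)
    (lam : Fin M → ℝ) (b : GIdx Kj → ℝ) : Prop :=
  ∀ β : GIdx Kj → ℝ, glObj X y lam b ≤ glObj X y lam β

/-- Largest eigenvalue of the positive semidefinite matrix `XᵀX/N`, expressed as the
supremum of its quadratic form over unit vectors. -/
def phiMax {N M : ℕ} {Kj : Fin M → ℕ} (X : Matrix (Fin N) (GIdx Kj) ℝ) : ℝ :=
  sSup {x | ∃ v : GIdx Kj → ℝ, (∑ k, (v k) ^ 2 = 1) ∧ x = (∑ i, (X.mulVec v i) ^ 2) / N}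

/-! ### Tail bound for Gaussian quadratic forms -/

lemma integral_exp_mul_sq_gaussianReal {t : ℝ} (ht : t < 1 / 2) :
    ∫ x, Real.exp (t * x ^ 2) ∂(gaussianReal 0 1) = (√(1 - 2 * t))⁻¹ := by
  rw [integral_gaussianReal_eq_integral_smul one_ne_zero]
  have h : ∀ x : ℝ, gaussianPDFReal 0 1 x • Real.exp (t * x ^ 2)
      = (√(2 * Real.pi))⁻¹ * Real.exp (-(1 / 2 - t) * x ^ 2) := by
    intro x
    rw [gaussianPDFReal, smul_eq_mul, mul_assoc, ← Real.exp_add]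
    simp only [NNReal.coe_one]
    ring_nf
  simp_rw [h]
  rw [integral_const_mul, integral_gaussian, ← Real.sqrt_inv, ← Real.sqrt_mul (by positivity),
    ← Real.sqrt_inv]
  congr 1
  have : (1 / 2 - t) ≠ 0 := by linarith
  have : (1 - 2 * t) ≠ 0 := by linarith
  have := Real.pi_ne_zero
  field_simp

lemma integrable_exp_mul_sq_gaussianReal {t : ℝ} (ht : t < 1 / 2) :
    Integrable (fun x => Real.exp (t * x ^ 2)) (gaussianReal 0 1) := by
  by_contra h
  have h1 := integral_exp_mul_sq_gaussianReal ht
  rw [integral_undef h] at h1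
  have : 0 < (√(1 - 2 * t))⁻¹ := by
    have : 0 < 1 - 2 * t := by linarith
    positivity
  linarith

/-- Bernstein-type bound on the moment generating function of `ξ ^ 2`, `ξ` standard Gaussian.
With `y = 1 / (1 - 2 t)` it reads `log y ≤ (y - 1 / y) / 2`, that is `s ≤ sinh s` at
`s = log y`. -/
lemma inv_sqrt_le_exp {t : ℝ} (h0 : 0 ≤ t) (ht : t < 1 / 2) :
    (√(1 - 2 * t))⁻¹ ≤ Real.exp (t + t ^ 2 / (1 - 2 * t)) := by
  have hp : 0 < 1 - 2 * t := by linarith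
  have hs : 0 ≤ -Real.log (1 - 2 * t) := by
    have := Real.log_nonpos hp.le (by linarith)
    linarith
  have h1 := Real.self_le_sinh_iff.2 hs
  rw [Real.sinh_eq, neg_neg, Real.exp_neg, Real.exp_log hp] at h1
  rw [← Real.log_le_iff_le_exp (by positivity), Real.log_inv, Real.log_sqrt hp.le]
  have h2 : ((1 - 2 * t)⁻¹ - (1 - 2 * t)) / 2 = 2 * (t + t ^ 2 / (1 - 2 * t)) := by
    field_simp
    ring
  linarith

/-- Laurent–Massart tail bound for weighted chi-square sums, with the sum of squares of the
weights controlled through their maximum `m` and the bound `K * m` on their sum. The linear term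
of the deviation is twice the optimal one. -/
lemma weighted_chiSq_tail {n : ℕ} (v : Fin n → ℝ) (hv : ∀ i, 0 ≤ v i) {m K x : ℝ} (hm : 0 < m)
    (hvm : ∀ i, v i ≤ m) (hK : 0 < K) (htr : ∑ i, v i ≤ K * m) (hx : 0 < x) :
    (Measure.pi fun _ : Fin n => gaussianReal 0 1).real
      {y | ∑ i, v i + 2 * m * (2 * x + √(K * x)) ≤ ∑ i, v i * y i ^ 2} ≤ Real.exp (-x) := by
  set r := √K with hr
  set s := √x with hs
  have hr0 : 0 < r := Real.sqrt_pos.2 hK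
  have hs0 : 0 < s := Real.sqrt_pos.2 hx
  have hr2 : r ^ 2 = K := Real.sq_sqrt hK.le
  have hs2 : s ^ 2 = x := Real.sq_sqrt hx.le
  -- The minimiser of the Chernoff exponent with deviation `2 * m * (x + √(K * x))`.
  set t := s / (m * (r + 2 * s)) with ht
  have ht0 : 0 < t := by positivity
  have htm : t * m = s / (r + 2 * s) := by rw [ht]; field_simp
  have h1tm : 1 - 2 * (t * m) = r / (r + 2 * s) := by rw [htm]; field_simp; ring
  have hpos : 0 < 1 - 2 * (t * m) := by rw [h1tm]; positivity
  have htv : ∀ i, t * v i ≤ t * m := fun i => by gcongr; exact hvm i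
  have htv0 : ∀ i, 0 ≤ t * v i := fun i => mul_nonneg ht0.le (hv i)
  have htv2 : ∀ i, t * v i < 1 / 2 := fun i => by linarith [htv i]
  have hexp : ∀ y : Fin n → ℝ, Real.exp (t * ∑ i, v i * y i ^ 2)
      = ∏ i, Real.exp (t * v i * y i ^ 2) := by
    intro y
    rw [← Real.exp_sum, mul_sum]
    simp_rw [mul_assoc]
  have hint : Integrable (fun y : Fin n → ℝ => Real.exp (t * ∑ i, v i * y i ^ 2))
      (Measure.pi fun _ : Fin n => gaussianReal 0 1) := by
    simp_rw [hexp]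
    exact Integrable.fintype_prod (f := fun i (z : ℝ) => Real.exp (t * v i * z ^ 2))
      fun i => integrable_exp_mul_sq_gaussianReal (htv2 i)
  refine (measure_ge_le_exp_mul_mgf _ ht0.le hint).trans ?_
  have hmgf : mgf (fun y : Fin n → ℝ => ∑ i, v i * y i ^ 2)
      (Measure.pi fun _ : Fin n => gaussianReal 0 1) t
      ≤ Real.exp (t * ∑ i, v i + (t * m) ^ 2 / (1 - 2 * (t * m)) * K) := by
    unfold mgf
    simp_rw [hexp]
    rw [integral_fintype_prod_eq_prod (f := fun i (z : ℝ) => Real.exp (t * v i * z ^ 2))]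
    calc ∏ i, ∫ z, Real.exp (t * v i * z ^ 2) ∂(gaussianReal 0 1)
        ≤ ∏ i, Real.exp (t * v i + (t * v i) * (t * m / (1 - 2 * (t * m)))) := by
          refine prod_le_prod (fun i _ => integral_nonneg fun _ => (Real.exp_pos _).le) ?_
          intro i _
          rw [integral_exp_mul_sq_gaussianReal (htv2 i)]
          refine (inv_sqrt_le_exp (htv0 i) (htv2 i)).trans ?_
          refine Real.exp_le_exp.2 (add_le_add le_rfl ?_)
          rw [sq, mul_div_assoc]
          refine mul_le_mul_of_nonneg_left ?_ (htv0 i)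
          exact div_le_div₀ (by positivity) (htv i) hpos (by linarith [htv i])
      _ = Real.exp (t * ∑ i, v i + t * (∑ i, v i) * (t * m / (1 - 2 * (t * m)))) := by
          rw [← Real.exp_sum, sum_add_distrib, ← sum_mul, ← mul_sum]
      _ ≤ _ := by
          refine Real.exp_le_exp.2 (add_le_add le_rfl ?_)
          calc t * (∑ i, v i) * (t * m / (1 - 2 * (t * m)))
              ≤ t * (K * m) * (t * m / (1 - 2 * (t * m))) := by gcongr
            _ = _ := by ring
  refine (mul_le_mul_of_nonneg_left hmgf (Real.exp_pos _).le).trans ?_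
  rw [← Real.exp_add]
  refine Real.exp_le_exp.2 ?_
  have hsq : √(K * x) = r * s := by rw [Real.sqrt_mul hK.le]
  rw [hsq, h1tm]
  have e1 : (-t * (∑ i, v i + 2 * m * (2 * x + r * s)) +
      (t * ∑ i, v i + (t * m) ^ 2 / (r / (r + 2 * s)) * K))
      = -2 * (t * m) * (2 * x + r * s) + (t * m) ^ 2 / (r / (r + 2 * s)) * K := by ring
  rw [e1, htm, ← hs2, ← hr2]
  have e2 : -2 * (s / (r + 2 * s)) * (2 * s ^ 2 + r * s) +
      (s / (r + 2 * s)) ^ 2 / (r / (r + 2 * s)) * r ^ 2 = -s ^ 2 - 2 * s ^ 3 / (r + 2 * s) := by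
    field_simp
    ring
  rw [e2]
  have : 0 ≤ 2 * s ^ 3 / (r + 2 * s) := by positivity
  linarith

open Matrix in
/-- Diagonalisation of `w ↦ ‖Bᵀ w‖²` under Gaussian noise: in the eigenbasis of `B Bᵀ`, which
preserves the standard Gaussian measure, the form is a weighted chi-square sum. -/
lemma gaussian_quadForm_tail {n k : ℕ} (B : Matrix (Fin n) (Fin k) ℝ) {σ m x : ℝ} (hσ : 0 < σ)
    (hm : 0 < m) (hx : 0 < x) (hk : 0 < k)
    (hB : ∀ a : Fin k → ℝ, (B *ᵥ a) ⬝ᵥ (B *ᵥ a) ≤ m * (a ⬝ᵥ a)) :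
    (Measure.pi fun _ : Fin n => gaussianReal 0 (σ ^ 2).toNNReal).real
      {w | σ ^ 2 * (∑ t, ∑ i, B i t ^ 2 + 2 * m * (2 * x + √(k * x)))
        ≤ (Bᵀ *ᵥ w) ⬝ᵥ (Bᵀ *ᵥ w)} ≤ Real.exp (-x) := by
  have hA : (B * Bᵀ).IsHermitian := by
    simpa using isHermitian_mul_conjTranspose_self B
  set u := hA.eigenvectorBasis with hu
  set v := hA.eigenvalues with hv
  have hgram : ∀ i j, (Bᵀ *ᵥ ⇑(u i)) ⬝ᵥ (Bᵀ *ᵥ ⇑(u j)) = if i = j then v j else 0 := by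
    intro i j
    have h1 : (Bᵀ *ᵥ ⇑(u i)) ⬝ᵥ (Bᵀ *ᵥ ⇑(u j)) = ⇑(u i) ⬝ᵥ ((B * Bᵀ) *ᵥ ⇑(u j)) := by
      rw [mulVec_transpose, ← dotProduct_mulVec, mulVec_mulVec]
    rw [h1, hA.mulVec_eigenvectorBasis, dotProduct_smul]
    have h2 := orthonormal_iff_ite.1 u.orthonormal j i
    rw [EuclideanSpace.inner_eq_star_dotProduct] at h2
    simp only [star_trivial] at h2
    rw [h2]
    split_ifs with h h' h'
    · simp [hv]
    · exact absurd h.symm h'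
    · exact absurd h'.symm h
    · simp
  have hv0 : ∀ i, 0 ≤ v i := by
    intro i
    have h := hgram i i
    rw [if_pos rfl] at h
    rw [← h]
    exact sum_nonneg fun _ _ => mul_self_nonneg _
  have hvm : ∀ i, v i ≤ m := by
    intro i
    have h := hB (Bᵀ *ᵥ ⇑(u i))
    rw [hgram, if_pos rfl, mulVec_mulVec, hA.mulVec_eigenvectorBasis, dotProduct_smul,
      smul_dotProduct] at h
    have h2 := orthonormal_iff_ite.1 u.orthonormal i i
    rw [EuclideanSpace.inner_eq_star_dotProduct] at h2
    simp only [star_trivial, if_true] at h2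
    rw [h2] at h
    simp only [smul_eq_mul, mul_one] at h
    change v i * v i ≤ m * v i at h
    rcases (hv0 i).eq_or_lt with h0 | h0
    · rw [← h0]; exact hm.le
    · exact le_of_mul_le_mul_right h h0
  have htrace : ∑ i, v i = ∑ t, ∑ i, B i t ^ 2 := by
    have h := hA.trace_eq_sum_eigenvalues
    simp only [RCLike.ofReal_real_eq_id, id] at h
    rw [← h, sum_comm]
    simp [Matrix.trace, Matrix.mul_apply, sq]
  have htr : ∑ i, v i ≤ k * m := by
    rw [htrace]
    calc ∑ t, ∑ i, B i t ^ 2 ≤ ∑ _t : Fin k, m := by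
          refine sum_le_sum fun t _ => ?_
          have h := hB (Pi.single t 1)
          simp only [mulVec_single_one, dotProduct_single, Pi.single_eq_same, mul_one] at h
          simpa [dotProduct, sq] using h
      _ = _ := by simp
  have hmeas : Measure.pi (fun _ : Fin n => gaussianReal 0 (σ ^ 2).toNNReal)
      = (Measure.pi fun _ : Fin n => gaussianReal 0 1).map
        (fun y => σ • WithLp.ofLp (∑ i, y i • u i)) := by
    have h1 : (Measure.pi fun _ : Fin n => gaussianReal 0 1).map
        (fun y => WithLp.ofLp (∑ i, y i • u i)) = Measure.pi fun _ : Fin n => gaussianReal 0 1 := by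
      have h := stdGaussian_eq_map_pi_orthonormalBasis u
      rw [← map_pi_eq_stdGaussian] at h
      have h' := congrArg (fun ν => Measure.map (WithLp.ofLp : EuclideanSpace ℝ (Fin n) → _) ν) h
      simp only at h'
      rw [Measure.map_map (by fun_prop) (by fun_prop),
        Measure.map_map (by fun_prop) (by fun_prop)] at h'
      have hid : (WithLp.ofLp ∘ WithLp.toLp 2 : (Fin n → ℝ) → (Fin n → ℝ)) = id := rfl
      rw [hid, Measure.map_id] at h'
      exact h'.symm
    have h2 : (Measure.pi fun _ : Fin n => gaussianReal 0 1).map (fun w => σ • w)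
        = Measure.pi (fun _ : Fin n => gaussianReal 0 (σ ^ 2).toNNReal) := by
      have h3 : (gaussianReal 0 1).map (σ * ·) = gaussianReal 0 (σ ^ 2).toNNReal := by
        rw [gaussianReal_map_const_mul, mul_zero, mul_one]
        congr 1
        ext
        simp [sq_nonneg]
      rw [← h3, ← Measure.pi_map_pi (fun _ => by fun_prop)]
      rfl
    rw [← h2, ← h1, Measure.map_map (by fun_prop) (by fun_prop), h1]
    rfl
  have hquad : ∀ y : Fin n → ℝ,
      (Bᵀ *ᵥ (σ • WithLp.ofLp (∑ i, y i • u i))) ⬝ᵥ (Bᵀ *ᵥ (σ • WithLp.ofLp (∑ i, y i • u i)))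
      = σ ^ 2 * ∑ i, v i * y i ^ 2 := by
    intro y
    have h1 : Bᵀ *ᵥ (WithLp.ofLp (∑ i, y i • u i)) = ∑ i, y i • (Bᵀ *ᵥ ⇑(u i)) := by
      rw [WithLp.ofLp_sum, mulVec_sum]
      simp [mulVec_smul]
    rw [mulVec_smul, h1, smul_dotProduct, dotProduct_smul, sum_dotProduct]
    simp_rw [dotProduct_sum, smul_dotProduct, dotProduct_smul, hgram]
    simp only [smul_eq_mul, mul_ite, mul_zero, sum_ite_eq, mem_univ, if_true]
    rw [← mul_assoc, ← sq]
    congr 1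
    exact sum_congr rfl fun i _ => by ring
  have hms : MeasurableSet {w : Fin n → ℝ |
      σ ^ 2 * (∑ t, ∑ i, B i t ^ 2 + 2 * m * (2 * x + √(k * x)))
        ≤ (Bᵀ *ᵥ w) ⬝ᵥ (Bᵀ *ᵥ w)} := by
    refine (isClosed_le (by fun_prop) ?_).measurableSet
    unfold dotProduct Matrix.mulVec dotProduct
    fun_prop
  rw [hmeas, map_measureReal_apply (by fun_prop) hms]
  have hk' : (0 : ℝ) < k := by exact_mod_cast hk
  refine le_trans (le_of_eq ?_) (weighted_chiSq_tail v hv0 hm hvm hk' htr hx)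
  congr 1
  ext y
  simp only [Set.mem_preimage, Set.mem_ofPred_eq, hquad, htrace]
  exact mul_le_mul_iff_right₀ (by positivity)

/-! ### Norm inequalities for group norms and quadratic forms -/

lemma gnorm_nonneg {M : ℕ} {Kj : Fin M → ℕ} (β : GIdx Kj → ℝ) (j : Fin M) : 0 ≤ gnorm β j :=
  Real.sqrt_nonneg _

lemma gnorm_sq {M : ℕ} {Kj : Fin M → ℕ} (β : GIdx Kj → ℝ) (j : Fin M) :
    gnorm β j ^ 2 = ∑ t, β ⟨j, t⟩ ^ 2 :=
  Real.sq_sqrt (sum_nonneg fun _ _ => sq_nonneg _)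

lemma gnorm_eq_norm {M : ℕ} {Kj : Fin M → ℕ} (β : GIdx Kj → ℝ) (j : Fin M) :
    gnorm β j = ‖WithLp.toLp 2 (fun t => β ⟨j, t⟩)‖ := by
  simp [gnorm, EuclideanSpace.norm_eq]

lemma gnorm_add_le {M : ℕ} {Kj : Fin M → ℕ} (a b : GIdx Kj → ℝ) (j : Fin M) :
    gnorm (a + b) j ≤ gnorm a j + gnorm b j := by
  simp_rw [gnorm_eq_norm]
  exact norm_add_le (WithLp.toLp 2 (fun t => a ⟨j, t⟩)) (WithLp.toLp 2 (fun t => b ⟨j, t⟩))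

lemma gnorm_neg {M : ℕ} {Kj : Fin M → ℕ} (a : GIdx Kj → ℝ) (j : Fin M) :
    gnorm (-a) j = gnorm a j := by
  simp [gnorm]

lemma group_inner_le {M : ℕ} {Kj : Fin M → ℕ} (a b : GIdx Kj → ℝ) (j : Fin M) :
    ∑ t, a ⟨j, t⟩ * b ⟨j, t⟩ ≤ gnorm a j * gnorm b j :=
  Real.sum_mul_le_sqrt_mul_sqrt _ _ _

lemma dotProduct_le_sum_gnorm {M : ℕ} {Kj : Fin M → ℕ} (a b : GIdx Kj → ℝ) :
    a ⬝ᵥ b ≤ ∑ j, gnorm a j * gnorm b j := by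
  rw [dotProduct, Fintype.sum_sigma]
  exact sum_le_sum fun j _ => group_inner_le a b j

lemma eq_zero_of_gnorm_eq_zero {M : ℕ} {Kj : Fin M → ℕ} {a : GIdx Kj → ℝ} {j : Fin M}
    (h : gnorm a j = 0) (t : Fin (Kj j)) : a ⟨j, t⟩ = 0 := by
  have h2 := gnorm_sq a j
  rw [h, zero_pow two_ne_zero] at h2
  have h3 := (sum_eq_zero_iff_of_nonneg fun t _ => sq_nonneg (a ⟨j, t⟩)).1 h2.symm t (mem_univ t)
  exact pow_eq_zero_iff two_ne_zero |>.1 h3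

/-- Crude Frobenius bound, which makes the suprema in `phiMax` and `specPsi` genuine. -/
lemma sum_mulVec_sq_le {N : ℕ} {ι : Type*} [Fintype ι] (X : Matrix (Fin N) ι ℝ) (v : ι → ℝ) :
    ∑ i, (X.mulVec v i) ^ 2 ≤ (∑ i, ∑ k, X i k ^ 2) * ∑ k, v k ^ 2 := by
  rw [sum_mul]
  exact sum_le_sum fun i _ => sum_mul_sq_le_sq_mul_sq _ _ _

lemma bddAbove_phiMax {N M : ℕ} {Kj : Fin M → ℕ} (X : Matrix (Fin N) (GIdx Kj) ℝ) :
    BddAbove {x | ∃ v : GIdx Kj → ℝ, (∑ k, (v k) ^ 2 = 1) ∧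
      x = (∑ i, (X.mulVec v i) ^ 2) / N} := by
  refine ⟨(∑ i, ∑ k, X i k ^ 2) / N, ?_⟩
  rintro x ⟨v, hv, rfl⟩
  have := sum_mulVec_sq_le X v
  rw [hv, mul_one] at this
  gcongr

/-- Normalisation of a non-zero vector, used to pass from suprema over unit vectors to
homogeneous quadratic bounds. -/
lemma exists_unit {N : ℕ} {ι : Type*} [Fintype ι] (X : Matrix (Fin N) ι ℝ) (v : ι → ℝ)
    (hv : 0 < ∑ k, v k ^ 2) :
    ∃ c : ℝ, ∑ k, ((c • v) k) ^ 2 = 1 ∧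
      ∑ i, (X.mulVec (c • v) i) ^ 2 = (∑ i, (X.mulVec v i) ^ 2) / ∑ k, v k ^ 2 := by
  refine ⟨(√(∑ k, v k ^ 2))⁻¹, ?_, ?_⟩
  · simp_rw [Pi.smul_apply, smul_eq_mul, mul_pow]
    rw [← mul_sum, inv_pow, Real.sq_sqrt hv.le, inv_mul_cancel₀ hv.ne']
  · simp_rw [Matrix.mulVec_smul, Pi.smul_apply, smul_eq_mul, mul_pow]
    rw [← mul_sum, inv_pow, Real.sq_sqrt hv.le, inv_mul_eq_div]

lemma sum_mulVec_sq_le_phiMax {N M : ℕ} {Kj : Fin M → ℕ} (hN : 1 ≤ N)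
    (X : Matrix (Fin N) (GIdx Kj) ℝ) (v : GIdx Kj → ℝ) :
    ∑ i, (X.mulVec v i) ^ 2 ≤ N * phiMax X * ∑ k, v k ^ 2 := by
  have hN' : (0 : ℝ) < N := by exact_mod_cast hN
  rcases (sum_nonneg fun k _ => sq_nonneg (v k) : 0 ≤ ∑ k, v k ^ 2).eq_or_lt with h | h
  · have := sum_mulVec_sq_le X v
    rw [← h, mul_zero] at this
    rwa [← h, mul_zero]
  · obtain ⟨c, hc, hX⟩ := exists_unit X v h
    have h1 := le_csSup (bddAbove_phiMax X) ⟨c • v, hc, rfl⟩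
    change _ ≤ phiMax X at h1
    rw [hX, div_le_iff₀ hN', div_le_iff₀ h] at h1
    linarith

lemma phiMax_nonneg {N M : ℕ} {Kj : Fin M → ℕ} (X : Matrix (Fin N) (GIdx Kj) ℝ) :
    0 ≤ phiMax X := by
  refine Real.sSup_nonneg ?_
  rintro x ⟨v, -, rfl⟩
  positivity

lemma specPsi_nonneg {N M : ℕ} {Kj : Fin M → ℕ} (X : Matrix (Fin N) (GIdx Kj) ℝ) (j : Fin M) :
    0 ≤ specPsi X j := by
  refine Real.sSup_nonneg ?_
  rintro x ⟨v, -, -, rfl⟩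
  positivity

/-- The columns of `X` in group `j`. -/
def groupBlock {N M : ℕ} {Kj : Fin M → ℕ} (X : Matrix (Fin N) (GIdx Kj) ℝ) (j : Fin M) :
    Matrix (Fin N) (Fin (Kj j)) ℝ := fun i t => X i ⟨j, t⟩

open Classical in
/-- The vector indexed by all coefficients which equals `a` on group `j` and vanishes elsewhere. -/
def extendGroup {M : ℕ} {Kj : Fin M → ℕ} (j : Fin M) (a : Fin (Kj j) → ℝ) : GIdx Kj → ℝ :=
  fun k => if h : k.1 = j then a (h ▸ k.2) else 0

lemma extendGroup_same {M : ℕ} {Kj : Fin M → ℕ} (j : Fin M) (a : Fin (Kj j) → ℝ)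
    (t : Fin (Kj j)) : extendGroup j a ⟨j, t⟩ = a t := by
  simp [extendGroup]

lemma extendGroup_of_ne {M : ℕ} {Kj : Fin M → ℕ} (j : Fin M) (a : Fin (Kj j) → ℝ)
    (k : GIdx Kj) (h : k.1 ≠ j) : extendGroup j a k = 0 := by
  simp [extendGroup, h]

lemma sum_mul_extendGroup {M : ℕ} {Kj : Fin M → ℕ} (j : Fin M) (a : Fin (Kj j) → ℝ)
    (f : GIdx Kj → ℝ) : ∑ k, f k * extendGroup j a k = ∑ t, f ⟨j, t⟩ * a t := by
  rw [Fintype.sum_sigma, sum_eq_single j]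
  · simp_rw [extendGroup_same]
  · intro l _ hl
    exact sum_eq_zero fun t _ => by rw [extendGroup_of_ne j a ⟨l, t⟩ hl, mul_zero]
  · simp

lemma mulVec_extendGroup {N M : ℕ} {Kj : Fin M → ℕ} (X : Matrix (Fin N) (GIdx Kj) ℝ)
    (j : Fin M) (a : Fin (Kj j) → ℝ) :
    X.mulVec (extendGroup j a) = (groupBlock X j).mulVec a := by
  ext i
  exact sum_mul_extendGroup j a (X i)

lemma groupBlock_quad_le {N M : ℕ} {Kj : Fin M → ℕ} (hN : 1 ≤ N)
    (X : Matrix (Fin N) (GIdx Kj) ℝ) (j : Fin M) (a : Fin (Kj j) → ℝ) :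
    (groupBlock X j).mulVec a ⬝ᵥ (groupBlock X j).mulVec a ≤ N * specPsi X j * (a ⬝ᵥ a) := by
  have hN' : (0 : ℝ) < N := by exact_mod_cast hN
  set v := extendGroup j a with hv
  have hsq : ∑ k, v k ^ 2 = a ⬝ᵥ a := by
    simp_rw [sq]
    rw [sum_mul_extendGroup j a v, dotProduct]
    simp_rw [hv, extendGroup_same]
  have hXsq : ∑ i, (X.mulVec v i) ^ 2
      = (groupBlock X j).mulVec a ⬝ᵥ (groupBlock X j).mulVec a := by
    rw [hv, mulVec_extendGroup, dotProduct]
    simp_rw [sq]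
  rw [← hXsq, ← hsq]
  rcases (sum_nonneg fun k _ => sq_nonneg (v k) : 0 ≤ ∑ k, v k ^ 2).eq_or_lt with h | h
  · have := sum_mulVec_sq_le X v
    rw [← h, mul_zero] at this
    rwa [← h, mul_zero]
  · obtain ⟨c, hc, hX⟩ := exists_unit X v h
    have hbdd : BddAbove {x | ∃ v : GIdx Kj → ℝ, (∀ k : GIdx Kj, k.1 ≠ j → v k = 0) ∧
        (∑ k, (v k) ^ 2 = 1) ∧ x = (∑ i, (∑ k, X i k * v k) ^ 2) / N} := by
      refine (bddAbove_phiMax X).mono ?_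
      rintro x ⟨v, -, h1, h2⟩
      exact ⟨v, h1, h2⟩
    have h1 := le_csSup hbdd ⟨c • v, fun k hk => by
      simp [hv, extendGroup_of_ne j a k hk], hc, rfl⟩
    change (∑ i, (X.mulVec (c • v) i) ^ 2) / N ≤ specPsi X j at h1
    rw [hX, div_le_iff₀ hN', div_le_iff₀ h] at h1
    linarith

/-! ### The oracle inequalities on the event of small noise -/

open Matrix in
/-- Stationarity of a Group Lasso solution along an active group: comparing `b` with the vector
obtained by shrinking group `j` by a factor `1 - ε` and letting `ε → 0` shows that the
correlation of the residual with group `j` is at least `λ_j`. -/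
lemma IsGLSol.le_gnorm {N M : ℕ} {Kj : Fin M → ℕ} (hN : 1 ≤ N)
    {X : Matrix (Fin N) (GIdx Kj) ℝ} {y : Fin N → ℝ} {lam : Fin M → ℝ} {b : GIdx Kj → ℝ}
    (hb : IsGLSol X y lam b) {j : Fin M} (hj : gnorm b j ≠ 0) :
    N * lam j ≤ gnorm (Xᵀ *ᵥ (y - X *ᵥ b)) j := by
  have hN' : (0 : ℝ) < N := by exact_mod_cast hN
  set bj := extendGroup j (fun t => b ⟨j, t⟩) with hbj
  set r := y - X *ᵥ b with hr
  set Q := ∑ i, ((X *ᵥ bj) i) ^ 2 with hQ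
  have hQ0 : 0 ≤ Q := sum_nonneg fun _ _ => sq_nonneg _
  have hgj : ∀ ε : ℝ, ε < 1 → gnorm (b - ε • bj) j = (1 - ε) * gnorm b j := by
    intro ε hε
    have : (0 : ℝ) ≤ 1 - ε := by linarith
    simp only [gnorm, Pi.sub_apply, Pi.smul_apply, smul_eq_mul, hbj, extendGroup_same]
    have h : ∀ t, (b ⟨j, t⟩ - ε * b ⟨j, t⟩) ^ 2 = (1 - ε) ^ 2 * b ⟨j, t⟩ ^ 2 := fun t => by ring
    simp_rw [h]
    rw [← mul_sum, Real.sqrt_mul (sq_nonneg _), Real.sqrt_sq this]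
  have hgl : ∀ ε : ℝ, ∀ l, l ≠ j → gnorm (b - ε • bj) l = gnorm b l := by
    intro ε l hl
    simp only [gnorm, Pi.sub_apply, Pi.smul_apply, smul_eq_mul, hbj]
    congr 1
    refine sum_congr rfl fun t _ => ?_
    rw [extendGroup_of_ne j _ ⟨l, t⟩ hl]
    ring
  have hpen : ∀ ε : ℝ, ε < 1 → ∑ l, lam l * gnorm (b - ε • bj) l
      = ∑ l, lam l * gnorm b l - ε * (lam j * gnorm b j) := by
    intro ε hε
    rw [← add_sum_erase _ _ (mem_univ j), ← add_sum_erase univ (fun l => lam l * gnorm b l)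
      (mem_univ j), hgj ε hε]
    rw [sum_congr rfl fun l hl => by rw [hgl ε l (ne_of_mem_erase hl)]]
    ring
  have hcross : r ⬝ᵥ (X *ᵥ bj) ≤ gnorm (Xᵀ *ᵥ r) j * gnorm b j := by
    rw [dotProduct_mulVec, ← mulVec_transpose, dotProduct, sum_mul_extendGroup]
    exact group_inner_le (Xᵀ *ᵥ r) b j
  have hfit : ∀ ε : ℝ, ∑ i, ((X *ᵥ (b - ε • bj)) i - y i) ^ 2
      = ∑ i, ((X *ᵥ b) i - y i) ^ 2 + 2 * ε * (r ⬝ᵥ (X *ᵥ bj)) + ε ^ 2 * Q := by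
    intro ε
    rw [dotProduct, hQ, mul_sum, mul_sum, ← sum_add_distrib, ← sum_add_distrib]
    refine sum_congr rfl fun i _ => ?_
    simp only [mulVec_sub, mulVec_smul, Pi.sub_apply, Pi.smul_apply, smul_eq_mul, hr]
    ring
  have hkey : ∀ ε : ℝ, 0 < ε → ε < 1 →
      N * (lam j * gnorm b j) ≤ r ⬝ᵥ (X *ᵥ bj) + ε * Q := by
    intro ε h0 h1
    have h := hb (b - ε • bj)
    unfold glObj at h
    rw [hpen ε h1, hfit ε, add_div, add_div] at h
    have h2 : 2 * ε * (lam j * gnorm b j) ≤ (2 * ε * (r ⬝ᵥ (X *ᵥ bj)) + ε ^ 2 * Q) / N := by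
      rw [add_div]; linarith
    rw [le_div_iff₀ hN'] at h2
    have h3 : ε * (N * (lam j * gnorm b j)) ≤ ε * (r ⬝ᵥ (X *ᵥ bj) + ε * Q) := by
      have : 0 ≤ ε ^ 2 * Q := by positivity
      nlinarith
    exact le_of_mul_le_mul_left h3 h0
  have hlim : N * (lam j * gnorm b j) ≤ r ⬝ᵥ (X *ᵥ bj) := by
    refine le_of_forall_pos_le_add fun δ hδ => ?_
    have hε : 0 < min (1 / 2) (δ / (Q + 1)) := by positivity
    refine (hkey _ hε ((min_le_left _ _).trans_lt (by norm_num))).trans ?_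
    have h1 : min (1 / 2) (δ / (Q + 1)) * Q ≤ δ / (Q + 1) * Q := by
      gcongr; exact min_le_right _ _
    have h2 : δ / (Q + 1) * Q ≤ δ := by
      rw [div_mul_eq_mul_div, div_le_iff₀ (by positivity)]
      nlinarith
    linarith
  have hpos : 0 < gnorm b j := lt_of_le_of_ne (gnorm_nonneg _ _) (Ne.symm hj)
  refine le_of_mul_le_mul_right ?_ hpos
  linarith

open Matrix in
/-- Basic inequality: on the event where the noise correlations are at most half the
regularisation parameters, prediction error and weighted group error are jointly controlled by
the error on the support of `βstar`. -/
lemma basic_inequality {N M : ℕ} {Kj : Fin M → ℕ} (hN : 1 ≤ N)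
    {X : Matrix (Fin N) (GIdx Kj) ℝ} {βstar b : GIdx Kj → ℝ} {w : Fin N → ℝ}
    {lam : Fin M → ℝ} (hlam : ∀ j, 0 < lam j)
    (hw : ∀ j, gnorm (Xᵀ *ᵥ w) j ≤ N * lam j / 2)
    (hb : IsGLSol X (fun i => (X *ᵥ βstar) i + w i) lam b) :
    (∑ i, ((X *ᵥ (b - βstar)) i) ^ 2) / N + ∑ j, lam j * gnorm (b - βstar) j
      ≤ 4 * ∑ j ∈ univ.filter (fun j => gnorm βstar j ≠ 0), lam j * gnorm (b - βstar) j := by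
  have hN' : (0 : ℝ) < N := by exact_mod_cast hN
  set Δ := b - βstar with hΔ
  have h := hb βstar
  unfold glObj at h
  have e1 : ∑ i, ((X *ᵥ b) i - ((X *ᵥ βstar) i + w i)) ^ 2
      = ∑ i, ((X *ᵥ Δ) i) ^ 2 - 2 * (w ⬝ᵥ (X *ᵥ Δ)) + ∑ i, w i ^ 2 := by
    rw [dotProduct, mul_sum, ← sum_sub_distrib, ← sum_add_distrib]
    refine sum_congr rfl fun i _ => ?_
    simp only [hΔ, mulVec_sub, Pi.sub_apply]
    ring
  have e2 : ∑ i, ((X *ᵥ βstar) i - ((X *ᵥ βstar) i + w i)) ^ 2 = ∑ i, w i ^ 2 :=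
    sum_congr rfl fun i _ => by ring
  rw [e1, e2, add_div, sub_div] at h
  have hnoise : 2 * (w ⬝ᵥ (X *ᵥ Δ)) / N ≤ ∑ j, lam j * gnorm Δ j := by
    rw [div_le_iff₀ hN', dotProduct_mulVec, ← mulVec_transpose]
    have h1 := dotProduct_le_sum_gnorm (Xᵀ *ᵥ w) Δ
    have h2 : ∑ j, gnorm (Xᵀ *ᵥ w) j * gnorm Δ j ≤ ∑ j, (N * lam j / 2) * gnorm Δ j :=
      sum_le_sum fun j _ => mul_le_mul_of_nonneg_right (hw j) (gnorm_nonneg _ _)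
    have h3 : ∑ j, (N * lam j / 2) * gnorm Δ j = N / 2 * ∑ j, lam j * gnorm Δ j := by
      rw [mul_sum]; exact sum_congr rfl fun j _ => by ring
    linarith
  have htri : ∑ j, lam j * gnorm Δ j + ∑ j, lam j * gnorm βstar j - ∑ j, lam j * gnorm b j
      ≤ 2 * ∑ j ∈ univ.filter (fun j => gnorm βstar j ≠ 0), lam j * gnorm Δ j := by
    rw [← sum_add_distrib, ← sum_sub_distrib, mul_sum, sum_filter]
    refine sum_le_sum fun j _ => ?_
    split_ifs with hj
    · have h1 : gnorm βstar j ≤ gnorm b j + gnorm Δ j := by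
        have := gnorm_add_le b (-Δ) j
        rw [gnorm_neg] at this
        simpa [hΔ] using this
      have := mul_le_mul_of_nonneg_left h1 (hlam j).le
      linarith
    · push Not at hj
      have h1 : gnorm Δ j = gnorm b j := by
        simp only [gnorm, hΔ, Pi.sub_apply]
        congr 1
        exact sum_congr rfl fun t _ => by rw [eq_zero_of_gnorm_eq_zero hj t, sub_zero]
      rw [h1, hj]
      linarith
  linarith

open Matrix in
/-- Sparsity: each active group of `b` has `‖(Xᵀ X Δ)^j‖ ≥ N λ_j / 2`, while
`‖Xᵀ X Δ‖² ≤ N φ_max ‖X Δ‖²`. -/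
lemma card_active_le {N M : ℕ} {Kj : Fin M → ℕ} (hN : 1 ≤ N)
    {X : Matrix (Fin N) (GIdx Kj) ℝ} {βstar b : GIdx Kj → ℝ} {w : Fin N → ℝ}
    {lam : Fin M → ℝ} {lmin : ℝ} (hmin : 0 < lmin) (hle : ∀ j, lmin ≤ lam j)
    (hw : ∀ j, gnorm (Xᵀ *ᵥ w) j ≤ N * lam j / 2)
    (hb : IsGLSol X (fun i => (X *ᵥ βstar) i + w i) lam b) :
    ((univ.filter (fun j => gnorm b j ≠ 0)).card : ℝ) * lmin ^ 2
      ≤ 4 * phiMax X * ((∑ i, ((X *ᵥ (b - βstar)) i) ^ 2) / N) := by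
  have hN' : (0 : ℝ) < N := by exact_mod_cast hN
  set Δ := b - βstar with hΔ
  set g := Xᵀ *ᵥ (X *ᵥ Δ) with hg
  set P := ∑ i, ((X *ᵥ Δ) i) ^ 2 with hP
  have hP0 : 0 ≤ P := sum_nonneg fun _ _ => sq_nonneg _
  have hact : ∀ j, gnorm b j ≠ 0 → N * lmin / 2 ≤ gnorm g j := by
    intro j hj
    have h1 := hb.le_gnorm hN hj
    have e : Xᵀ *ᵥ ((fun i => (X *ᵥ βstar) i + w i) - X *ᵥ b) = Xᵀ *ᵥ w + -g := by
      rw [hg, hΔ, ← mulVec_neg, ← mulVec_add]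
      congr 1
      ext i
      simp [mulVec_sub]
      ring
    rw [e] at h1
    have h2 := gnorm_add_le (Xᵀ *ᵥ w) (-g) j
    rw [gnorm_neg] at h2
    have h3 : (N : ℝ) * lmin ≤ N * lam j := by gcongr; exact hle j
    linarith [hw j]
  have hG : ∑ k, g k ^ 2 = ∑ j, gnorm g j ^ 2 := by
    rw [Fintype.sum_sigma]
    simp_rw [gnorm_sq]
  have hlow : ((univ.filter (fun j => gnorm b j ≠ 0)).card : ℝ) * (N * lmin / 2) ^ 2
      ≤ ∑ k, g k ^ 2 := by
    rw [hG]
    calc _ = ∑ j ∈ univ.filter (fun j => gnorm b j ≠ 0), (N * lmin / 2) ^ 2 := by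
          rw [sum_const, nsmul_eq_mul]
      _ ≤ ∑ j ∈ univ.filter (fun j => gnorm b j ≠ 0), gnorm g j ^ 2 := by
          refine sum_le_sum fun j hj => ?_
          have := hact j (mem_filter.1 hj).2
          gcongr
      _ ≤ _ := sum_le_sum_of_subset_of_nonneg (subset_univ _) fun _ _ _ => sq_nonneg _
  -- `‖g‖² = ⟨X g, X Δ⟩ ≤ ‖X g‖ ‖X Δ‖`, so `‖g‖² ≤ N φ_max ‖X Δ‖²` after cancelling `‖g‖²`.
  have hup : ∑ k, g k ^ 2 ≤ N * phiMax X * P := by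
    have h1 : ∑ k, g k ^ 2 = ∑ i, (X *ᵥ g) i * (X *ᵥ Δ) i := by
      have : g ⬝ᵥ g = (X *ᵥ g) ⬝ᵥ (X *ᵥ Δ) := by
        nth_rewrite 2 [hg]
        rw [dotProduct_mulVec, vecMul_transpose]
      simpa [dotProduct, sq] using this
    have h2 : (∑ k, g k ^ 2) ^ 2 ≤ (N * phiMax X * ∑ k, g k ^ 2) * P := by
      nth_rewrite 1 [h1]
      refine (sum_mul_sq_le_sq_mul_sq _ _ _).trans ?_
      exact mul_le_mul_of_nonneg_right (sum_mulVec_sq_le_phiMax hN X g) hP0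
    rcases (sum_nonneg fun k _ => sq_nonneg (g k) : 0 ≤ ∑ k, g k ^ 2).eq_or_lt with h | h
    · rw [← h]
      have := phiMax_nonneg X
      positivity
    · refine le_of_mul_le_mul_right ?_ h
      linarith
  have h := hlow.trans hup
  rw [mul_div_assoc', le_div_iff₀ hN']
  refine le_of_mul_le_mul_left ?_ hN'
  linarith

open Matrix in
/-- Deterministic part: the prediction bound and the bound on the `λ`-weighted group error. -/
lemma prediction_and_group_bound {N M : ℕ} {Kj : Fin M → ℕ} (hN : 1 ≤ N)
    {X : Matrix (Fin N) (GIdx Kj) ℝ} {βstar b : GIdx Kj → ℝ} {w : Fin N → ℝ}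
    {lam : Fin M → ℝ} (hlam : ∀ j, 0 < lam j) {κ : ℝ} (hκ : 0 < κ)
    (hw : ∀ j, gnorm (Xᵀ *ᵥ w) j ≤ N * lam j / 2)
    (hb : IsGLSol X (fun i => (X *ᵥ βstar) i + w i) lam b) {J : Finset (Fin M)}
    (hJ : J = univ.filter (fun j => gnorm βstar j ≠ 0))
    (hRE : ∀ Δ : GIdx Kj → ℝ, Δ ≠ 0 →
      (∑ j ∈ Jᶜ, lam j * gnorm Δ j) ≤ 3 * ∑ j ∈ J, lam j * gnorm Δ j →
      κ * √N * √(∑ j ∈ J, (gnorm Δ j) ^ 2) ≤ √(∑ i, (X.mulVec Δ i) ^ 2)) :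
    (∑ i, ((X *ᵥ (b - βstar)) i) ^ 2) / N ≤ 16 / κ ^ 2 * ∑ j ∈ J, lam j ^ 2 ∧
      ∑ j, lam j * gnorm (b - βstar) j ≤ 16 / κ ^ 2 * ∑ j ∈ J, lam j ^ 2 := by
  have hN' : (0 : ℝ) < N := by exact_mod_cast hN
  have hbasic := basic_inequality hN hlam hw hb
  rw [← hJ] at hbasic
  set Δ := b - βstar with hΔ
  set S := ∑ j ∈ J, lam j ^ 2 with hS
  have hS0 : 0 ≤ S := sum_nonneg fun _ _ => sq_nonneg _
  set P := (∑ i, ((X *ᵥ Δ) i) ^ 2) / N with hP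
  have hP0 : 0 ≤ P := by positivity
  have hG0 : 0 ≤ ∑ j, lam j * gnorm Δ j :=
    sum_nonneg fun j _ => mul_nonneg (hlam j).le (gnorm_nonneg _ _)
  by_cases h0 : Δ = 0
  · have hz : ∀ j, gnorm Δ j = 0 := fun j => by simp [h0, gnorm]
    have hR : 0 ≤ 16 / κ ^ 2 * S := by positivity
    simp only [hz, mul_zero, sum_const_zero, add_zero] at hbasic ⊢
    exact ⟨hbasic.trans hR, hR⟩
  set d := √(∑ j ∈ J, gnorm Δ j ^ 2) with hd
  have hcone : (∑ j ∈ Jᶜ, lam j * gnorm Δ j) ≤ 3 * ∑ j ∈ J, lam j * gnorm Δ j := by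
    have := sum_add_sum_compl J (fun j => lam j * gnorm Δ j)
    linarith
  have hre : κ * d ≤ √P := by
    have h := hRE Δ h0 hcone
    rw [hP, Real.sqrt_div' _ hN'.le, le_div_iff₀ (Real.sqrt_pos.2 hN')]
    linarith
  have hcs : ∑ j ∈ J, lam j * gnorm Δ j ≤ √S * d := Real.sum_mul_le_sqrt_mul_sqrt _ _ _
  set p := √P with hp
  have hp0 : 0 ≤ p := Real.sqrt_nonneg _
  have hpp : p ^ 2 = P := Real.sq_sqrt hP0
  set s := √S with hs
  have hs0 : 0 ≤ s := Real.sqrt_nonneg _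
  have hss : s ^ 2 = S := Real.sq_sqrt hS0
  have hd' : d ≤ p / κ := by rw [le_div_iff₀ hκ]; linarith
  have hmain : P + ∑ j, lam j * gnorm Δ j ≤ 4 * (s * (p / κ)) := by
    have := mul_le_mul_of_nonneg_left hd' hs0
    linarith
  have hpb : p ≤ 4 * s / κ := by
    rcases hp0.eq_or_lt with h | h
    · rw [← h]; positivity
    · refine le_of_mul_le_mul_right ?_ h
      have e : 4 * s / κ * p = 4 * (s * (p / κ)) := by ring
      rw [e, ← sq, hpp]
      linarith
  have hfin : 4 * (s * (p / κ)) ≤ 16 / κ ^ 2 * S := by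
    have e : 4 * (s * (p / κ)) = 4 * s / κ * p := by ring
    have e' : 16 / κ ^ 2 * S = 4 * s / κ * (4 * s / κ) := by
      rw [← hss]; field_simp; ring
    rw [e, e']
    gcongr
  exact ⟨by linarith, by linarith⟩

/-! ### Probability of the event of small noise -/

open Matrix in
/-- Probability that the noise correlation with one group exceeds half the regularisation
parameter. -/
lemma noise_group_tail {N M : ℕ} {Kj : Fin M → ℕ} (hM : 2 ≤ M) (hN : 1 ≤ N)
    (X : Matrix (Fin N) (GIdx Kj) ℝ) {σ : ℝ} (hσ : 0 < σ) {q : ℝ} (hq : 1 < q) {l : ℝ}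
    (hl0 : 0 < l) (j : Fin M) (hKj : 1 ≤ Kj j)
    (hl : 2 * σ / √N * √(trPsi X j + 2 * specPsi X j *
        (2 * q * Real.log M + √(Kj j * q * Real.log M))) ≤ l) :
    (Measure.pi fun _ : Fin N => gaussianReal 0 (σ ^ 2).toNNReal).real
      {w | N * l / 2 < gnorm (Xᵀ *ᵥ w) j} ≤ (M : ℝ) ^ (-q) := by
  have hN' : (0 : ℝ) < N := by exact_mod_cast hN
  have hM' : (1 : ℝ) < M := by exact_mod_cast hM
  have hM0 : (0 : ℝ) < M := by linarith
  have hx : 0 < q * Real.log M := mul_pos (by linarith) (Real.log_pos hM')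
  have hB := groupBlock_quad_le hN X j
  have hgn : ∀ w, gnorm (Xᵀ *ᵥ w) j ^ 2
      = ((groupBlock X j)ᵀ *ᵥ w) ⬝ᵥ ((groupBlock X j)ᵀ *ᵥ w) := by
    intro w
    rw [gnorm_sq, dotProduct]
    simp_rw [sq]
    rfl
  rcases (specPsi_nonneg X j).eq_or_lt with h0 | h0
  · -- A degenerate group: its columns vanish, so the event is empty.
    have hz : ∀ w, gnorm (Xᵀ *ᵥ w) j = 0 := by
      intro w
      have h := hB ((groupBlock X j)ᵀ *ᵥ w)
      rw [← h0, mul_zero, zero_mul] at h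
      have h1 : (groupBlock X j) *ᵥ ((groupBlock X j)ᵀ *ᵥ w) = 0 :=
        dotProduct_self_eq_zero.1 (le_antisymm h (sum_nonneg fun _ _ => mul_self_nonneg _))
      have h2 : gnorm (Xᵀ *ᵥ w) j ^ 2 = 0 := by
        rw [hgn, dotProduct_mulVec, vecMul_transpose, h1, zero_dotProduct]
      exact pow_eq_zero_iff two_ne_zero |>.1 h2
    have he : {w : Fin N → ℝ | N * l / 2 < gnorm (Xᵀ *ᵥ w) j} = ∅ := by
      ext w
      simp only [hz, Set.mem_ofPred_eq, Set.mem_empty_iff_false, iff_false, not_lt]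
      positivity
    rw [he, measureReal_empty]
    positivity
  · have hm : 0 < N * specPsi X j := by positivity
    have htail := gaussian_quadForm_tail (groupBlock X j) hσ hm hx hKj hB
    have hexp : Real.exp (-(q * Real.log M)) = (M : ℝ) ^ (-q) := by
      rw [Real.rpow_def_of_pos hM0]
      congr 1
      ring
    rw [hexp] at htail
    refine le_trans (measureReal_mono ?_) htail
    intro w hw
    simp only [Set.mem_ofPred_eq] at hw ⊢
    rw [← hgn]
    set T := trPsi X j + 2 * specPsi X j * (2 * q * Real.log M + √(Kj j * q * Real.log M)) with hT
    have htr0 : 0 ≤ trPsi X j := by unfold trPsi; positivity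
    have hT0 : 0 ≤ T := by
      have : 0 ≤ 2 * q * Real.log M := by linarith
      positivity
    have htrN : ∑ t, ∑ i, groupBlock X j i t ^ 2 = N * trPsi X j := by
      unfold trPsi
      rw [mul_div_cancel₀ _ hN'.ne']
      rfl
    have hlhs : σ ^ 2 * (∑ t, ∑ i, groupBlock X j i t ^ 2 +
        2 * (N * specPsi X j) * (2 * (q * Real.log M) + √(Kj j * (q * Real.log M))))
        = σ ^ 2 * N * T := by
      rw [htrN, hT, ← mul_assoc (Kj j : ℝ) q, ← mul_assoc 2 q]
      ring
    rw [hlhs]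
    have hsq : (2 * σ / √N * √T) ^ 2 ≤ l ^ 2 := by gcongr
    rw [mul_pow, div_pow, Real.sq_sqrt hN'.le, Real.sq_sqrt hT0, div_mul_eq_mul_div,
      div_le_iff₀ hN'] at hsq
    have h2 : (N * l / 2) ^ 2 ≤ gnorm (Xᵀ *ᵥ w) j ^ 2 := by gcongr
    refine le_trans ?_ h2
    have h3 : (2 * σ) ^ 2 * T * N ≤ l ^ 2 * N * N := by gcongr
    linarith

open Matrix in
lemma measurable_gnorm_transpose_mulVec {N M : ℕ} {Kj : Fin M → ℕ}
    (X : Matrix (Fin N) (GIdx Kj) ℝ) (j : Fin M) :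
    Measurable fun w : Fin N → ℝ => gnorm (Xᵀ *ᵥ w) j := by
  unfold gnorm Matrix.mulVec dotProduct
  fun_prop

open Matrix in
/-- Union bound over the groups. -/
lemma noise_event {N M : ℕ} {Kj : Fin M → ℕ} (hM : 2 ≤ M) (hN : 1 ≤ N) (hKj : ∀ j, 1 ≤ Kj j)
    (X : Matrix (Fin N) (GIdx Kj) ℝ) {σ : ℝ} (hσ : 0 < σ) {q : ℝ} (hq : 1 < q)
    {lam : Fin M → ℝ} (hlam_pos : ∀ j, 0 < lam j)
    (hlam : ∀ j, 2 * σ / √N * √(trPsi X j + 2 * specPsi X j *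
        (2 * q * Real.log M + √(Kj j * q * Real.log M))) ≤ lam j) :
    1 - (M : ℝ) ^ (1 - q) ≤ (Measure.pi fun _ : Fin N => gaussianReal 0 (σ ^ 2).toNNReal).real
      {w | ∀ j, gnorm (Xᵀ *ᵥ w) j ≤ N * lam j / 2} := by
  have hM0 : (0 : ℝ) < M := by exact_mod_cast (by omega : 0 < M)
  set ν := Measure.pi fun _ : Fin N => gaussianReal 0 (σ ^ 2).toNNReal with hν
  set E : Set (Fin N → ℝ) := {w | ∀ j, gnorm (Xᵀ *ᵥ w) j ≤ N * lam j / 2} with hE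
  have hEm : MeasurableSet E := by
    have : E = ⋂ j, {w | gnorm (Xᵀ *ᵥ w) j ≤ N * lam j / 2} := by
      ext w; simp [hE]
    rw [this]
    exact MeasurableSet.iInter fun j =>
      measurableSet_le (measurable_gnorm_transpose_mulVec X j) measurable_const
  have hcompl : Eᶜ = ⋃ j, {w | N * lam j / 2 < gnorm (Xᵀ *ᵥ w) j} := by
    ext w; simp [hE]
  have hb : ν.real Eᶜ ≤ (M : ℝ) ^ (1 - q) := by
    rw [hcompl]
    refine (measureReal_iUnion_fintype_le _).trans ?_
    calc _ ≤ ∑ _j : Fin M, (M : ℝ) ^ (-q) := sum_le_sum fun j _ =>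
          noise_group_tail hM hN X hσ hq (hlam_pos j) j (hKj j) (hlam j)
      _ = _ := by
          rw [sum_const, card_univ, Fintype.card_fin, nsmul_eq_mul, sub_eq_add_neg,
            Real.rpow_add hM0, Real.rpow_one]
  rw [probReal_compl_eq_one_sub hEm] at hb
  linarith

/-- under `M(β*) ≤ s` and the restricted eigenvalue assumption RE(s), with
probability at least `1 − 2M^{1−q}`, every Group Lasso solution `β̂` simultaneously satisfies
the prediction, `(2,1)`-norm, and sparsity oracle inequalities. -/
theorem group_lasso_oracle_inequalities
    {N M : ℕ} {Kj : Fin M → ℕ} (hM : 2 ≤ M) (hN : 1 ≤ N) (hKj : ∀ j, 1 ≤ Kj j)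
    (X : Matrix (Fin N) (GIdx Kj) ℝ) (βstar : GIdx Kj → ℝ)
    {Ω : Type*} [MeasurableSpace Ω] (μ : Measure Ω) [IsProbabilityMeasure μ]
    (W : Ω → Fin N → ℝ) (σ : ℝ) (hσ : 0 < σ)
    (hW : Measure.map W μ = Measure.pi fun _ : Fin N => gaussianReal 0 (σ ^ 2).toNNReal)
    (q : ℝ) (hq : 1 < q) (lam : Fin M → ℝ) (hlam_pos : ∀ j, 0 < lam j)
    (hlam : ∀ j, 2 * σ / Real.sqrt N *
      Real.sqrt (trPsi X j + 2 * specPsi X j *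
        (2 * q * Real.log M + Real.sqrt (Kj j * q * Real.log M))) ≤ lam j)
    (s : ℕ) (hs : 1 ≤ s)
    (hβs : (Finset.univ.filter (fun j => gnorm βstar j ≠ 0)).card ≤ s)
    (κ : ℝ) (hκ : 0 < κ)
    (hRE : ∀ J : Finset (Fin M), J.card ≤ s → ∀ Δ : GIdx Kj → ℝ, Δ ≠ 0 →
      (∑ j ∈ Jᶜ, lam j * gnorm Δ j) ≤ 3 * ∑ j ∈ J, lam j * gnorm Δ j →
      κ * Real.sqrt N * Real.sqrt (∑ j ∈ J, (gnorm Δ j) ^ 2) ≤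
        Real.sqrt (∑ i, (X.mulVec Δ i) ^ 2)) :
    ∃ A : Set Ω, MeasurableSet A ∧ 1 - 2 * (M : ℝ) ^ ((1 : ℝ) - q) ≤ (μ A).toReal ∧
      ∀ ω ∈ A, ∀ b : GIdx Kj → ℝ,
        IsGLSol X (fun i => X.mulVec βstar i + W ω i) lam b →
        (∑ i, (X.mulVec (b - βstar) i) ^ 2) / N ≤
            16 / κ ^ 2 * ∑ j ∈ Finset.univ.filter (fun j => gnorm βstar j ≠ 0), (lam j) ^ 2 ∧
        (∑ j, gnorm (b - βstar) j) ≤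
            16 / κ ^ 2 * ((∑ j ∈ Finset.univ.filter (fun j => gnorm βstar j ≠ 0), (lam j) ^ 2) /
              sInf (Set.range lam)) ∧
        ((Finset.univ.filter (fun j => gnorm b j ≠ 0)).card : ℝ) ≤
            64 * phiMax X / κ ^ 2 *
              ((∑ j ∈ Finset.univ.filter (fun j => gnorm βstar j ≠ 0), (lam j) ^ 2) /
                (sInf (Set.range lam)) ^ 2) := by
  have hEm : MeasurableSet
      {w : Fin N → ℝ | ∀ j, gnorm (X.transpose.mulVec w) j ≤ N * lam j / 2} := by
    rw [Set.ofPred_forall]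
    exact MeasurableSet.iInter fun j =>
      measurableSet_le (measurable_gnorm_transpose_mulVec X j) measurable_const
  -- A non-measurable `W` would have the zero measure as its law.
  have hWm : AEMeasurable W μ := by
    by_contra h
    rw [Measure.map_of_not_aemeasurable h] at hW
    have h1 := congrArg (fun ν : Measure (Fin N → ℝ) => ν Set.univ) hW
    simp at h1
  obtain ⟨A, hAsub, hAm, hAeq⟩ :=
    (hWm.nullMeasurableSet_preimage hEm).exists_measurable_subset_ae_eq
  refine ⟨A, hAm, ?_, ?_⟩
  · rw [measure_congr hAeq, ← Measure.map_apply_of_aemeasurable hWm hEm, hW]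
    have h := noise_event hM hN hKj X hσ hq hlam_pos hlam
    have h0 : 0 ≤ (M : ℝ) ^ (1 - q) := by positivity
    change _ ≤ (Measure.pi fun _ : Fin N => gaussianReal 0 (σ ^ 2).toNNReal).real _
    linarith
  · intro ω hω b hb
    have hw : ∀ j, gnorm (X.transpose.mulVec (W ω)) j ≤ N * lam j / 2 := hAsub hω
    have : Nonempty (Fin M) := ⟨⟨0, by omega⟩⟩
    obtain ⟨j₀, hj₀⟩ : sInf (Set.range lam) ∈ Set.range lam :=
      (Set.range_nonempty lam).csInf_mem (Set.finite_range lam)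
    have hmin : 0 < sInf (Set.range lam) := hj₀ ▸ hlam_pos j₀
    have hle : ∀ j, sInf (Set.range lam) ≤ lam j := fun j =>
      csInf_le (Set.finite_range lam).bddBelow ⟨j, rfl⟩
    obtain ⟨h1, h2⟩ := prediction_and_group_bound hN hlam_pos hκ hw hb rfl
      (fun Δ => hRE _ hβs Δ)
    refine ⟨h1, ?_, ?_⟩
    · rw [← mul_div_assoc, le_div_iff₀ hmin]
      refine le_trans ?_ h2
      rw [sum_mul]
      refine sum_le_sum fun j _ => ?_
      rw [mul_comm]
      exact mul_le_mul_of_nonneg_right (hle j) (gnorm_nonneg _ _)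
    · have h3 := card_active_le hN hmin hle hw hb
      rw [← mul_div_assoc, le_div_iff₀ (by positivity)]
      refine h3.trans ?_
      have h4 := mul_le_mul_of_nonneg_left h1
        (by have := phiMax_nonneg X; positivity : 0 ≤ 4 * phiMax X)
      refine h4.trans (le_of_eq ?_)
      ring

end GroupLasso
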